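/- arXiv:2203.03106 — 6 statements merged into one kernel-verified Lean document; each statement's English description precedes it below -/
import Mathlib

section
/- Let d ≥ 1, S > 0, σ₀ ≥ 0, P ≥ 1 a natural number, and define clip_S(v) = (max(1, ‖v‖/S))⁻¹ • v on ℝ^d with the Euclidean norm. Let μ = Measure.pi (fun _ : Fin d => gaussianReal 0 (S²σ₀²/P)) be the law of the Gaussian noise vector Z on Fin d → ℝ. Then for every fixed v ∈ ℝ^d, (1/d) · ∫ ‖clip_S(v) + z − v‖² dμ(z) ≤ (1/d) · (max(0, ‖v‖ − S))² + σ₀²S²/P. -/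
/-!
The squared error splits coordinatewise. Each coordinate of the noise is a centred Gaussian, so the
cross term vanishes and the coordinate contributes its squared clipping bias plus the noise variance
(`integral_sq_add_gaussianReal`, transported to the product measure by `integral_coord_sq`). The
squared bias vector has norm `(1 - c)² ‖v‖²` with `c` the clipping factor, which equals
`max(0, ‖v‖ - S)²` (`clip_bias_sq`). Hence the bound in fact holds with equality.
-/

open MeasureTheory ProbabilityTheory
open scoped NNReal ENNReal

lemma integrable_sq_add_gaussianReal (a : ℝ) (w : ℝ≥0) :
    Integrable (fun x : ℝ => (a + x) ^ 2) (gaussianReal 0 w) := by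
  have h : MemLp (fun x : ℝ => a + x) 2 (gaussianReal 0 w) :=
    (memLp_const a).add (memLp_id_gaussianReal' 2 (by simp))
  exact h.integrable_sq

lemma integral_sq_add_gaussianReal (a : ℝ) (w : ℝ≥0) :
    ∫ x, (a + x) ^ 2 ∂(gaussianReal 0 w) = a ^ 2 + w := by
  have h : MemLp (fun x : ℝ => a + x) 2 (gaussianReal 0 w) :=
    (memLp_const a).add (memLp_id_gaussianReal' 2 (by simp))
  have hid : Integrable (fun x : ℝ => x) (gaussianReal 0 w) :=
    (memLp_id_gaussianReal' 1 (by simp)).integrable le_rfl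
  have hmean : ∫ x, (a + x) ∂(gaussianReal 0 w) = a := by
    rw [integral_add (integrable_const a) hid]
    simp
  have hvar : Var[fun x => a + x; gaussianReal 0 w] = w := by
    rw [variance_const_add hid.aestronglyMeasurable, variance_fun_id_gaussianReal]
  rw [variance_eq_sub h, hmean] at hvar
  simp only [Pi.pow_apply] at hvar
  linarith

lemma integrable_coord_sq {d : ℕ} (a : ℝ) (w : ℝ≥0) (i : Fin d) :
    Integrable (fun z : Fin d → ℝ => (a + z i) ^ 2)
      (Measure.pi fun _ : Fin d => gaussianReal 0 w) :=
  (measurePreserving_eval (fun _ : Fin d => gaussianReal 0 w) i).integrable_comp_of_integrable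
    (integrable_sq_add_gaussianReal a w)

lemma integral_coord_sq {d : ℕ} (a : ℝ) (w : ℝ≥0) (i : Fin d) :
    ∫ z : Fin d → ℝ, (a + z i) ^ 2 ∂(Measure.pi fun _ : Fin d => gaussianReal 0 w)
      = a ^ 2 + w := by
  have hp := measurePreserving_eval (fun _ : Fin d => gaussianReal 0 w) i
  have h := integral_map (μ := Measure.pi fun _ : Fin d => gaussianReal 0 w)
    (f := fun x : ℝ => (a + x) ^ 2) hp.measurable.aemeasurable (by fun_prop)
  rw [hp.map_eq, integral_sq_add_gaussianReal] at h
  exact h.symm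

/-- Clipping moves a vector of norm `n` by exactly `max 0 (n - S)`. -/
lemma clip_bias_sq {S n : ℝ} (hS : 0 < S) :
    ((max 1 (n / S))⁻¹ - 1) ^ 2 * n ^ 2 = (max 0 (n - S)) ^ 2 := by
  rcases le_total n S with h | h
  · rw [max_eq_left ((div_le_one hS).2 h), max_eq_left (sub_nonpos.2 h)]
    simp
  · have hn : 0 < n := hS.trans_le h
    rw [max_eq_right ((one_le_div hS).2 h), max_eq_right (sub_nonneg.2 h)]
    field_simp
    ring

/-- The mean-square-error bound (Eq. 2 of the paper) for the privatized local update
in DP-FedAvg: with Euclidean norm on `ℝ^d`, clipping threshold `S`, noise multiplier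
`σ₀` and `P` participating agents, the per-coordinate MSE of `clip_S v + Z` is bounded
by the clipping bias plus the noise variance `σ₀²S²/P`. -/
theorem dp_fedavg_mse_bound
    (d : ℕ) (hd : 1 ≤ d) (S : ℝ) (hS : 0 < S) (σ₀ : ℝ) (hσ₀ : 0 ≤ σ₀)
    (P : ℕ) (hP : 1 ≤ P) (v : Fin d → ℝ) :
    (1 / (d : ℝ)) *
        ∫ z : Fin d → ℝ,
          (∑ i, (((max 1 (Real.sqrt (∑ j, (v j) ^ 2) / S))⁻¹ • v) i + z i - v i) ^ 2)
          ∂(Measure.pi fun _ : Fin d =>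
              gaussianReal 0 ⟨S ^ 2 * σ₀ ^ 2 / P, by positivity⟩)
      ≤ (1 / (d : ℝ)) * (max 0 (Real.sqrt (∑ i, (v i) ^ 2) - S)) ^ 2
          + σ₀ ^ 2 * S ^ 2 / P := by
  set c : ℝ := (max 1 (Real.sqrt (∑ j, (v j) ^ 2) / S))⁻¹ with hc
  set w : ℝ≥0 := ⟨S ^ 2 * σ₀ ^ 2 / P, by positivity⟩ with hw
  have hwv : (w : ℝ) = S ^ 2 * σ₀ ^ 2 / P := rfl
  have hd0 : (d : ℝ) ≠ 0 := by positivity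
  have hsplit : ∀ (z : Fin d → ℝ) (i : Fin d),
      ((c • v) i + z i - v i) ^ 2 = ((c - 1) * v i + z i) ^ 2 := by
    intro z i
    simp only [Pi.smul_apply, smul_eq_mul]
    ring
  have hbias : ∑ i, ((c - 1) * v i) ^ 2 = (max 0 (Real.sqrt (∑ i, (v i) ^ 2) - S)) ^ 2 := by
    rw [← clip_bias_sq hS, Real.sq_sqrt (Finset.sum_nonneg fun i _ => sq_nonneg (v i)),
      Finset.mul_sum]
    simp only [mul_pow, hc]
  simp only [hsplit]
  rw [integral_finsetSum _ fun i _ => integrable_coord_sq _ w i]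
  simp only [integral_coord_sq]
  rw [Finset.sum_add_distrib, hbias, hwv]
  simp only [Finset.sum_const, Finset.card_univ, Fintype.card_fin, nsmul_eq_mul]
  apply le_of_eq
  field_simp
end

section
/- Let E be a real inner product space, let S > 0, λ > 0, η > 0, and let g : ℕ → E. Let w : ℕ → E satisfy w(0) = w₀ and, for all 0 ≤ q ≤ Q−1, w(q+1) = w(q) − η • (g(q) + (if ‖w(q) − w₀‖ > S then λ • (w(q) − w₀) else 0)). Then w(Q) − w₀ = −η • ∑_{q=0}^{Q−1} (∏_{r=q+1}^{Q−1} c(r)) • g(q), where c(r) = 1 − λη if ‖w(r) − w₀‖ > S and c(r) = 1 otherwise. -/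
/-!
The deviation `d q = w q - w₀` satisfies the affine recursion `d (q + 1) = c q • d q - η • g q`, since an
active regularizer turns `d q` into `d q - η • lam • d q = (1 - lam * η) • d q`. Starting from `d 0 = 0`,
the discrete variation-of-constants formula `affine_rec_unroll` gives the claim.
-/

/-- Discrete variation of constants for an affine recursion with scalar multipliers `c`. -/
lemma affine_rec_unroll {E : Type*} [AddCommGroup E] [Module ℝ E] (η : ℝ) (c : ℕ → ℝ)
    (g d : ℕ → E) (Q : ℕ) (h0 : d 0 = 0) (hd : ∀ q < Q, d (q + 1) = c q • d q - η • g q) :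
    d Q = -η • ∑ q ∈ Finset.range Q, (∏ r ∈ Finset.Ico (q + 1) Q, c r) • g q := by
  induction Q with
  | zero => simpa using h0
  | succ n ih =>
    -- Every earlier gradient picks up the new factor `c n`; the newest one has an empty product.
    have hsum : ∑ q ∈ Finset.range n, (∏ r ∈ Finset.Ico (q + 1) (n + 1), c r) • g q
        = c n • ∑ q ∈ Finset.range n, (∏ r ∈ Finset.Ico (q + 1) n, c r) • g q := by
      rw [Finset.smul_sum]
      refine Finset.sum_congr rfl fun q hq => ?_
      rw [Finset.prod_Ico_succ_top (Finset.mem_range.mp hq), mul_comm, mul_smul]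
    rw [hd n n.lt_succ_self, ih fun q hq => hd q (hq.trans n.lt_succ_self),
      Finset.sum_range_succ, hsum, Finset.Ico_self, Finset.prod_empty]
    module

/-- Unrolled form of the BLUR local update recursion (Lemma 2 of the paper):
each stochastic gradient enters the final local update with an adaptive discount
factor equal to the product of `(1 − λη)` over the subsequent steps at which the
regularizer is active. -/
theorem blur_unroll
    {E : Type*} [NormedAddCommGroup E] [InnerProductSpace ℝ E]
    (S lam η : ℝ) (hS : 0 < S) (hlam : 0 < lam) (hη : 0 < η)
    (g : ℕ → E) (Q : ℕ) (w₀ : E) (w : ℕ → E) (hw0 : w 0 = w₀)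
    (hrec : ∀ q < Q,
      w (q + 1) = w q - η • (g q + if S < ‖w q - w₀‖ then lam • (w q - w₀) else 0)) :
    w Q - w₀ = -η • ∑ q ∈ Finset.range Q,
      (∏ r ∈ Finset.Ico (q + 1) Q,
        (if S < ‖w r - w₀‖ then 1 - lam * η else 1)) • g q := by
  refine affine_rec_unroll η (fun r => if S < ‖w r - w₀‖ then 1 - lam * η else 1) g
    (fun q => w q - w₀) Q (by simp [hw0]) fun q hq => ?_
  simp only [hrec q hq]
  split_ifs <;> module
end

section
/- Let E be a real inner product space, let S > 0, λ > 0, η > 0, and let g : ℕ → E. Let w : ℕ → E satisfy w(0) = w₀ and, for all 0 ≤ q ≤ Q−1, w(q+1) = w(q) − η • (g(q) + (if ‖w(q) − w₀‖ > S then λ • (w(q) − w₀) else 0)). If ‖w(r) − w₀‖ > S for every 1 ≤ r ≤ Q−1, then w(Q) − w₀ = −η • ∑_{q=0}^{Q−1} (1 − λη)^{Q−1−q} • g(q). -/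
/-!
The displacement `d q = w q - w₀` obeys the recursion `d (q + 1) = (1 - λη) • d q - η • g q`.
At the active steps this is the update rule itself; at `q = 0`, where the regularizer is inactive,
the missing term `λ • (w 0 - w₀)` is zero anyway. Solving the recursion with `d 0 = 0` by induction
gives the geometrically discounted sum.
-/

/-- Horner step for the geometrically discounted sum. -/
theorem discounted_sum_succ {E : Type*} [AddCommGroup E] [Module ℝ E]
    (c : ℝ) (g : ℕ → E) (n : ℕ) :
    ∑ q ∈ Finset.range (n + 1), c ^ (n + 1 - 1 - q) • g q =
      c • ∑ q ∈ Finset.range n, c ^ (n - 1 - q) • g q + g n := by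
  rw [Finset.sum_range_succ, Finset.smul_sum]
  congr 1
  · refine Finset.sum_congr rfl fun q hq => ?_
    have hq' := Finset.mem_range.mp hq
    rw [smul_smul, ← pow_succ', show n - 1 - q + 1 = n + 1 - 1 - q by omega]
  · simp

/-- Special case of the unrolled BLUR recursion (Lemma 2 of the paper) in which the
regularizer is active at every local step after the first: the effective learning
rate of each step is geometrically discounted by powers of `(1 − λη)`. -/
theorem blur_unroll_all_active
    {E : Type*} [NormedAddCommGroup E] [InnerProductSpace ℝ E]
    (S lam η : ℝ) (hS : 0 < S) (hlam : 0 < lam) (hη : 0 < η)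
    (g : ℕ → E) (Q : ℕ) (w₀ : E) (w : ℕ → E) (hw0 : w 0 = w₀)
    (hrec : ∀ q < Q,
      w (q + 1) = w q - η • (g q + if S < ‖w q - w₀‖ then lam • (w q - w₀) else 0))
    (hact : ∀ r, 1 ≤ r → r ≤ Q - 1 → S < ‖w r - w₀‖) :
    w Q - w₀ = -η • ∑ q ∈ Finset.range Q, (1 - lam * η) ^ (Q - 1 - q) • g q := by
  have hreg : ∀ q < Q, (if S < ‖w q - w₀‖ then lam • (w q - w₀) else 0) = lam • (w q - w₀) := by
    intro q hq
    rcases Nat.eq_zero_or_pos q with rfl | hpos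
    · simp [hw0]
    · rw [if_pos (hact q hpos (by omega))]
  have main : ∀ n ≤ Q,
      w n - w₀ = -η • ∑ q ∈ Finset.range n, (1 - lam * η) ^ (n - 1 - q) • g q := by
    intro n
    induction n with
    | zero => simp [hw0]
    | succ n ih =>
      intro hn
      have hstep : w (n + 1) - w₀ = (1 - lam * η) • (w n - w₀) - η • g n := by
        rw [hrec n hn, hreg n hn]
        module
      rw [hstep, ih (Nat.le_of_succ_le hn), discounted_sum_succ]
      module
  exact main Q le_rfl
end

section
/- Let E be a real inner product space, let S > 0, λ > 0, η > 0 with λη < 1, let G ≥ 0, and let g : ℕ → E satisfy ‖g(q)‖ ≤ G for all q. Let w : ℕ → E satisfy w(0) = w₀ and, for all 0 ≤ q ≤ Q−1, w(q+1) = w(q) − η • (g(q) + (if ‖w(q) − w₀‖ > S then λ • (w(q) − w₀) else 0)). If ‖w(r) − w₀‖ > S for every 1 ≤ r ≤ Q−1, then ‖w(Q) − w₀‖ ≤ (G/λ)·(1 − (1 − λη)^Q), and in particular ‖w(Q) − w₀‖ ≤ G/λ. -/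
/-! On the active region one local step contracts the displacement from `w₀` by the factor
`1 - λη` and adds `-η g(q)`. The first step has the same form although the regularizer is inactive
there, because the displacement is then `0`. So the norm `d q = ‖w q - w₀‖` satisfies
`d (q + 1) ≤ (1 - λη) d q + ηG` with `d 0 = 0`, and `(G/λ)(1 - (1 - λη)^q)` solves this recursion
with equality. -/

/-- Quantitative version of the paper's claim that BLUR limits the ℓ2 norm of the
local update: under `G`-bounded stochastic gradients, if the regularizer is active
at every local step after the first, then the local update norm is bounded by
`(G/λ)(1 − (1 − λη)^Q)`, hence by `G/λ`, independently of `Q`. -/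
theorem blur_bounded_update
    {E : Type*} [NormedAddCommGroup E] [InnerProductSpace ℝ E]
    (S lam η : ℝ) (hS : 0 < S) (hlam : 0 < lam) (hη : 0 < η) (hle : lam * η < 1)
    (G : ℝ) (hG : 0 ≤ G) (g : ℕ → E) (hg : ∀ q, ‖g q‖ ≤ G)
    (Q : ℕ) (w₀ : E) (w : ℕ → E) (hw0 : w 0 = w₀)
    (hrec : ∀ q < Q,
      w (q + 1) = w q - η • (g q + if S < ‖w q - w₀‖ then lam • (w q - w₀) else 0))
    (hact : ∀ r, 1 ≤ r → r ≤ Q - 1 → S < ‖w r - w₀‖) :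
    ‖w Q - w₀‖ ≤ (G / lam) * (1 - (1 - lam * η) ^ Q) ∧ ‖w Q - w₀‖ ≤ G / lam := by
  have hstep : ∀ q < Q, w (q + 1) - w₀ = (1 - lam * η) • (w q - w₀) - η • g q := by
    intro q hq
    -- At `q = 0` the displacement vanishes, so the inactive branch also equals `lam • (w q - w₀)`.
    have hif : (if S < ‖w q - w₀‖ then lam • (w q - w₀) else 0) = lam • (w q - w₀) := by
      rcases Nat.eq_zero_or_pos q with rfl | hpos
      · simp [hw0]
      · exact if_pos (hact q hpos (by omega))
    rw [hrec q hq, hif]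
    module
  have hbound : ∀ q ≤ Q, ‖w q - w₀‖ ≤ (G / lam) * (1 - (1 - lam * η) ^ q) := by
    intro q
    induction q with
    | zero => simp [hw0]
    | succ q ih =>
      intro hq
      have hc : 0 ≤ 1 - lam * η := by linarith
      calc ‖w (q + 1) - w₀‖
          = ‖(1 - lam * η) • (w q - w₀) - η • g q‖ := by rw [hstep q hq]
        _ ≤ ‖(1 - lam * η) • (w q - w₀)‖ + ‖η • g q‖ := norm_sub_le _ _
        _ = (1 - lam * η) * ‖w q - w₀‖ + η * ‖g q‖ := by
          rw [norm_smul_of_nonneg hc, norm_smul_of_nonneg hη.le]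
        _ ≤ (1 - lam * η) * ((G / lam) * (1 - (1 - lam * η) ^ q)) + η * G := by
          gcongr
          · exact ih (by omega)
          · exact hg q
        _ = (G / lam) * (1 - (1 - lam * η) ^ (q + 1)) := by
          field_simp
          ring
  refine ⟨hbound Q le_rfl, (hbound Q le_rfl).trans ?_⟩
  have hpow : 0 ≤ (1 - lam * η) ^ Q := pow_nonneg (by linarith) Q
  exact mul_le_of_le_one_right (by positivity) (by linarith)
end

section
/- Let a, b ∈ ℝ and S > 0 with |a − b| ≤ S. Let δ ∈ (0,1), ε ∈ (0,1), and c > √(2 ln(1.25/δ)), and set σ = cS/ε. Then for every measurable set A ⊆ ℝ, gaussianReal a σ² A ≤ e^ε · gaussianReal b σ² A + δ. -/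
open MeasureTheory ProbabilityTheory
open scoped NNReal ENNReal

/-!
Where the density ratio `p_a / p_b` is at most `e^ε`, integrating the densities gives the
multiplicative bound, so only the region where the ratio exceeds `e^ε` has to be paid for by `δ`.
After standardisation that region lies in the half-line `(t, ∞)` with `t = c - ε / (2c)`,
and it remains to see that a standard normal variable exceeds `t` with probability at most `δ`,
where `1.25 e^{-c²/2} < δ`.

* If `t ≥ 0`, the tail is at most `e^{-t²/2} / 2 ≤ e^{1/2} / 2 · e^{-c²/2}`, and `e^{1/2} / 2 ≤ 1.25`
  (`gaussianReal_Ioi_le_exp`).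
* If `t < 0`, then `c² < 1/2` forces `δ > 0.9`, while `c² > 2 ln 1.25 ≥ 0.4` keeps `t` close to `0`,
  so that the tail is barely larger than `1/2` (`gaussianReal_Ioi_le_add`).
-/

lemma gaussianReal_Ioi_zero_le : gaussianReal 0 1 (Set.Ioi 0) ≤ ENNReal.ofReal (1 / 2) := by
  have hsymm : gaussianReal 0 1 (Set.Iio 0) = gaussianReal 0 1 (Set.Ioi 0) := by
    have h := gaussianReal_map_neg (μ := 0) (v := 1)
    rw [neg_zero] at h
    conv_lhs => rw [← h]
    rw [Measure.map_apply measurable_neg measurableSet_Iio]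
    congr 1
    ext x
    simp
  have hdisj : Disjoint (Set.Iio (0 : ℝ)) (Set.Ioi 0) :=
    Set.disjoint_left.2 fun x (hx : x < 0) (hx2 : 0 < x) => lt_asymm hx hx2
  have h1 : gaussianReal 0 1 (Set.Iio 0 ∪ Set.Ioi 0) ≤ 1 := prob_le_one
  rw [measure_union hdisj measurableSet_Ioi, hsymm] at h1
  rw [← ENNReal.ofReal_toReal (measure_ne_top (gaussianReal 0 1) (Set.Ioi 0))] at h1 ⊢
  rw [← ENNReal.ofReal_add ENNReal.toReal_nonneg ENNReal.toReal_nonneg,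
    ENNReal.ofReal_le_one] at h1
  exact ENNReal.ofReal_le_ofReal (by linarith)

/-- Translating by `t` turns the tail into an integral over the positive half-line, where
`φ(x + t) ≤ e^{-t²/2} φ(x)`. The factor `1/2` improves on the plain Chernoff bound. -/
lemma gaussianReal_Ioi_le_exp {t : ℝ} (ht : 0 ≤ t) :
    gaussianReal 0 1 (Set.Ioi t) ≤ ENNReal.ofReal (Real.exp (-t ^ 2 / 2) / 2) := by
  have hshift : gaussianReal 0 1 (Set.Ioi t) = gaussianReal (-t) 1 (Set.Ioi 0) := by
    have h := gaussianReal_map_sub_const (μ := 0) (v := 1) t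
    rw [zero_sub] at h
    rw [← h, Measure.map_apply (by fun_prop) measurableSet_Ioi]
    congr 1
    ext x
    simp
  have hpdf : ∀ x ∈ Set.Ioi (0 : ℝ), gaussianPDF (-t) 1 x
      ≤ ENNReal.ofReal (Real.exp (-t ^ 2 / 2)) * gaussianPDF 0 1 x := by
    intro x hx
    have hx : 0 < x := hx
    rw [gaussianPDF, gaussianPDF, ← ENNReal.ofReal_mul (Real.exp_pos _).le]
    apply ENNReal.ofReal_le_ofReal
    rw [gaussianPDFReal, gaussianPDFReal, mul_left_comm, ← Real.exp_add]
    gcongr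
    have := mul_nonneg ht hx.le
    push_cast
    linarith
  rw [hshift, gaussianReal_apply _ one_ne_zero]
  calc ∫⁻ x in Set.Ioi 0, gaussianPDF (-t) 1 x
      ≤ ∫⁻ x in Set.Ioi 0, ENNReal.ofReal (Real.exp (-t ^ 2 / 2)) * gaussianPDF 0 1 x :=
        setLIntegral_mono' measurableSet_Ioi hpdf
    _ = ENNReal.ofReal (Real.exp (-t ^ 2 / 2)) * gaussianReal 0 1 (Set.Ioi 0) := by
        rw [lintegral_const_mul _ (measurable_gaussianPDF _ _), gaussianReal_apply _ one_ne_zero]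
    _ ≤ ENNReal.ofReal (Real.exp (-t ^ 2 / 2)) * ENNReal.ofReal (1 / 2) := by
        gcongr
        exact gaussianReal_Ioi_zero_le
    _ = ENNReal.ofReal (Real.exp (-t ^ 2 / 2) / 2) := by
        rw [← ENNReal.ofReal_mul (Real.exp_pos _).le]
        congr 1
        ring

/-- The standard normal density is at most `1`, so the interval `(t, 0]` carries mass at
most `-t`. -/
lemma gaussianReal_Ioi_le_add {t : ℝ} (ht : t ≤ 0) :
    gaussianReal 0 1 (Set.Ioi t) ≤ ENNReal.ofReal (-t + 1 / 2) := by
  have hpdf : ∀ x ∈ Set.Ioc t 0, gaussianPDF 0 1 x ≤ 1 := by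
    intro x _
    rw [gaussianPDF, ENNReal.ofReal_le_one, gaussianPDFReal]
    apply mul_le_one₀
    · apply inv_le_one_of_one_le₀
      rw [Real.one_le_sqrt]
      push_cast
      linarith [Real.pi_gt_three]
    · positivity
    · rw [Real.exp_le_one_iff]
      push_cast
      have := sq_nonneg (x - 0)
      linarith
  calc gaussianReal 0 1 (Set.Ioi t)
      = gaussianReal 0 1 (Set.Ioc t 0 ∪ Set.Ioi 0) := by rw [Set.Ioc_union_Ioi_eq_Ioi ht]
    _ ≤ gaussianReal 0 1 (Set.Ioc t 0) + gaussianReal 0 1 (Set.Ioi 0) := measure_union_le _ _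
    _ ≤ ENNReal.ofReal (-t) + ENNReal.ofReal (1 / 2) := by
        gcongr
        · rw [gaussianReal_apply _ one_ne_zero]
          refine (setLIntegral_mono' measurableSet_Ioc hpdf).trans ?_
          simp
        · exact gaussianReal_Ioi_zero_le
    _ = ENNReal.ofReal (-t + 1 / 2) := by
        rw [ENNReal.ofReal_add (by linarith) (by norm_num)]

lemma gaussianReal_Ioi_le_delta {δ ε c : ℝ} (hδ : δ ∈ Set.Ioo (0 : ℝ) 1)
    (hε : ε ∈ Set.Ioo (0 : ℝ) 1) (hc : Real.sqrt (2 * Real.log (1.25 / δ)) < c) :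
    gaussianReal 0 1 (Set.Ioi (c - ε / (2 * c))) ≤ ENNReal.ofReal δ := by
  obtain ⟨hδ0, hδ1⟩ := hδ
  obtain ⟨hε0, hε1⟩ := hε
  have hc0 : 0 < c := (Real.sqrt_nonneg _).trans_lt hc
  have hlog : 2 * Real.log (1.25 / δ) < c ^ 2 := (Real.sqrt_lt' hc0).1 hc
  have hδc : 1.25 * Real.exp (-c ^ 2 / 2) < δ := by
    have h : 1.25 / δ < Real.exp (c ^ 2 / 2) :=
      (Real.log_lt_iff_lt_exp (by positivity)).1 (by linarith)
    rw [div_lt_iff₀ hδ0] at h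
    rw [neg_div, Real.exp_neg, ← div_eq_mul_inv, div_lt_iff₀ (Real.exp_pos _)]
    linarith
  set r := ε / (2 * c) with hr
  have hrc : r * c = ε / 2 := by
    rw [hr]
    field_simp
  have hr0 : 0 < r := by positivity
  rcases le_or_gt 0 (c - r) with ht | ht
  · refine (gaussianReal_Ioi_le_exp ht).trans (ENNReal.ofReal_le_ofReal ?_)
    have hexp : Real.exp (-(c - r) ^ 2 / 2) ≤ Real.exp (1 / 2) * Real.exp (-c ^ 2 / 2) := by
      rw [← Real.exp_add]
      apply Real.exp_le_exp.2
      nlinarith [sq_nonneg r]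
    have hhalf : Real.exp (1 / 2) ≤ 2 := by
      have h := Real.add_one_le_exp (-(1 / 2) : ℝ)
      rw [Real.exp_neg] at h
      have h2 := mul_inv_cancel₀ (Real.exp_pos (1 / 2)).ne'
      nlinarith [Real.exp_pos (1 / 2)]
    nlinarith [Real.exp_pos (-c ^ 2 / 2)]
  · refine (gaussianReal_Ioi_le_add ht.le).trans (ENNReal.ofReal_le_ofReal ?_)
    have hc_upper : c ^ 2 < 1 / 2 := by nlinarith
    have hδ_lower : 0.9 < δ := by
      have := Real.add_one_le_exp (-c ^ 2 / 2)
      linarith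
    have hc_lower : 0.4 < c ^ 2 := by
      have h := Real.one_sub_inv_le_log_of_pos (show (0 : ℝ) < 1.25 / δ by positivity)
      rw [inv_div] at h
      have : δ / 1.25 < 0.8 := by
        rw [div_lt_iff₀ (by norm_num)]
        linarith
      linarith
    have hc6 : 0.6 < c := by nlinarith
    have hr_upper : r < 0.84 := by nlinarith
    linarith

/-- Cutting an event at the privacy-loss threshold: off the set where
`(x - a) (a - b) > ε v - (a - b)² / 2`, the density ratio `p_a / p_b` is at most `e^ε`. -/
lemma gaussianReal_le_exp_mul_add (a b ε : ℝ) {v : ℝ≥0} (hv : v ≠ 0) {A : Set ℝ}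
    (hA : MeasurableSet A) :
    gaussianReal a v A ≤ ENNReal.ofReal (Real.exp ε) * gaussianReal b v A
      + gaussianReal a v {x | ε * v - (a - b) ^ 2 / 2 < (x - a) * (a - b)} := by
  set B := {x | ε * v - (a - b) ^ 2 / 2 < (x - a) * (a - b)} with hB
  have hBm : MeasurableSet B := measurableSet_lt (by fun_prop) (by fun_prop)
  have hv0 : (0 : ℝ) < v := NNReal.coe_pos.2 (pos_iff_ne_zero.2 hv)
  have hpdf : ∀ x ∈ A \ B, gaussianPDF a v x
      ≤ ENNReal.ofReal (Real.exp ε) * gaussianPDF b v x := by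
    intro x hx
    have hxB : (x - a) * (a - b) ≤ ε * v - (a - b) ^ 2 / 2 := not_lt.1 hx.2
    rw [gaussianPDF, gaussianPDF, ← ENNReal.ofReal_mul (Real.exp_pos _).le]
    apply ENNReal.ofReal_le_ofReal
    rw [gaussianPDFReal, gaussianPDFReal, mul_left_comm, ← Real.exp_add]
    gcongr
    rw [← sub_nonneg]
    have : ε + -(x - b) ^ 2 / (2 * v) - -(x - a) ^ 2 / (2 * v)
        = (ε * v - (a - b) ^ 2 / 2 - (x - a) * (a - b)) / v := by
      field_simp
      ring
    rw [this]
    exact div_nonneg (by linarith) hv0.le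
  calc gaussianReal a v A ≤ gaussianReal a v (A \ B ∪ B) :=
        measure_mono (by rw [Set.sdiff_union_self]; exact Set.subset_union_left)
    _ ≤ gaussianReal a v (A \ B) + gaussianReal a v B := measure_union_le _ _
    _ ≤ ENNReal.ofReal (Real.exp ε) * gaussianReal b v A + gaussianReal a v B := by
        gcongr
        rw [gaussianReal_apply _ hv]
        refine (setLIntegral_mono' (hA.diff hBm) hpdf).trans ?_
        rw [lintegral_const_mul _ (measurable_gaussianPDF _ _), ← gaussianReal_apply _ hv]
        gcongr
        exact Set.sdiff_subset

/-- Standardisation of a half-line, in either direction according to the sign of `s`. -/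
lemma gaussianReal_halfLine (a t : ℝ) {s : ℝ} {v : ℝ≥0} (hs : s ≠ 0) (hv : (v : ℝ) = s ^ 2) :
    gaussianReal a v {x | t < (x - a) / s} = gaussianReal 0 1 (Set.Ioi t) := by
  have h : (gaussianReal a v).map (fun x => (x - a) / s) = gaussianReal 0 1 := by
    have h1 := gaussianReal_map_sub_const (μ := a) (v := v) a
    have h2 := gaussianReal_map_div_const (μ := a - a) (v := v) s
    rw [← h1, Measure.map_map (by fun_prop) (by fun_prop)] at h2
    refine h2.trans ?_
    congr 1
    · simp
    · ext
      push_cast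
      rw [hv]
      exact div_self (pow_ne_zero 2 hs)
  rw [← h, Measure.map_apply (by fun_prop) measurableSet_Ioi]
  rfl

/-- The one-dimensional Gaussian mechanism (Lemma 1 of the paper): if `|a − b| ≤ S`
and `σ = cS/ε` with `c > √(2 ln(1.25/δ))`, then for every measurable set `A`,
`N(a, σ²)(A) ≤ e^ε · N(b, σ²)(A) + δ`. -/
theorem gaussian_mechanism_one_dim
    (a b S : ℝ) (hS : 0 < S) (hab : |a - b| ≤ S)
    (δ : ℝ) (hδ : δ ∈ Set.Ioo (0 : ℝ) 1)
    (ε : ℝ) (hε : ε ∈ Set.Ioo (0 : ℝ) 1)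
    (c : ℝ) (hc : Real.sqrt (2 * Real.log (1.25 / δ)) < c)
    (A : Set ℝ) (hA : MeasurableSet A) :
    gaussianReal a ⟨(c * S / ε) ^ 2, by positivity⟩ A
      ≤ ENNReal.ofReal (Real.exp ε) * gaussianReal b ⟨(c * S / ε) ^ 2, by positivity⟩ A
        + ENNReal.ofReal δ := by
  have hc0 : 0 < c := (Real.sqrt_nonneg _).trans_lt hc
  have hε0 : 0 < ε := hε.1
  set σ := c * S / ε with hσ
  have hσ0 : 0 < σ := by positivity
  have hSσ : ε * σ = c * S := by
    rw [hσ]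
    field_simp
  set v : ℝ≥0 := ⟨σ ^ 2, by positivity⟩ with hv
  have hvσ : (v : ℝ) = σ ^ 2 := rfl
  have hv0 : v ≠ 0 := by
    rw [← NNReal.coe_ne_zero, hvσ]
    positivity
  refine (gaussianReal_le_exp_mul_add a b ε hv0 hA).trans ?_
  gcongr
  refine le_trans ?_ (gaussianReal_Ioi_le_delta hδ hε hc)
  set d := a - b with hd
  -- The threshold is decreasing in `|d|`, hence smallest at `|d| = S`, where it is `c - ε / (2c)`.
  have key : ∀ z : ℝ, ε * σ ^ 2 - d ^ 2 / 2 < z * σ * |d| → c - ε / (2 * c) < z := by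
    intro z hz
    have hd0 : 0 ≤ |d| := abs_nonneg d
    rw [← sq_abs d] at hz
    have hr : ε / (2 * c) = S / (2 * σ) := by
      rw [div_eq_div_iff (by positivity) (by positivity)]
      linarith
    rw [hr]
    by_contra! hle
    have h1 : z * σ ≤ c * σ - S / 2 := by
      calc z * σ ≤ (c - S / (2 * σ)) * σ := by gcongr
        _ = c * σ - S / 2 := by field_simp
    have h2 : z * σ * |d| ≤ (c * σ - S / 2) * |d| := by gcongr
    have h3 : ε * σ ^ 2 = c * σ * S := by
      rw [pow_two, ← mul_assoc, hSσ]
      ring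
    have h4 : 0 ≤ c * σ * (S - |d|) :=
      mul_nonneg (by positivity) (by linarith)
    have h5 : 0 ≤ |d| * (S - |d|) := mul_nonneg hd0 (by linarith)
    nlinarith
  rcases le_total 0 d with hd0 | hd0
  · rw [← gaussianReal_halfLine a _ hσ0.ne' hvσ]
    apply measure_mono
    intro x hx
    apply key
    rw [div_mul_cancel₀ _ hσ0.ne', abs_of_nonneg hd0]
    exact hx
  · rw [← gaussianReal_halfLine a _ (neg_ne_zero.2 hσ0.ne') (hvσ.trans (neg_sq σ).symm)]
    apply measure_mono
    intro x hx
    apply key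
    rw [div_neg, neg_mul, div_mul_cancel₀ _ hσ0.ne', abs_of_nonpos hd0, neg_mul_neg]
    exact hx
end

section
/- Let d ≥ 1, let a, b : Fin d → ℝ with √(∑ i, (a i − b i)²) ≤ S for some S > 0. Let δ ∈ (0,1), ε ∈ (0,1), and c > √(2 ln(1.25/δ)), and set σ = cS/ε. Then for every measurable set A ⊆ (Fin d → ℝ), Measure.pi (fun i => gaussianReal (a i) σ²) A ≤ e^ε · Measure.pi (fun i => gaussianReal (b i) σ²) A + δ. -/
/-!
Write `P = N(a, σ²I)`, `Q = N(b, σ²I)` and `D = ‖a - b‖₂`. Then `P` has density `exp L` with respect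
to `Q`, where the privacy loss
`L x = ∑ i, ((x i - b i)² - (x i - a i)²) / (2σ²)` is an affine function of `x`
(`pi_gaussianReal_eq_withDensity`). On `{L ≤ ε}` the density is at most `e^ε`, so
`P A ≤ e^ε * Q A + P {L > ε}`, and only the last term has to be bounded by `δ`.

Under `P` one has `L = (D / σ) * Y + D² / (2σ²)` with `Y` a standard Gaussian
(`map_sum_pi_gaussianReal`); this reduces the problem to dimension one and gives
`P {L > ε} = ℙ (Y > t)` with `t = ε σ / D - D / (2σ)`. Since `D ≤ S = ε σ / c` and `ε < 1`,
`t ≥ c - 1 / (2c)`. For `c² ≥ 1/2` this bound is nonnegative and the tail estimate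
`ℙ (Y > t) ≤ exp (-t² / 2) / 2` yields at most `(√e / 2) * exp (-c² / 2) ≤ 1.25 * exp (-c² / 2) < δ`.
For `c² < 1/2` the hypothesis `δ < 1` forces `c² > 2 * log 1.25 ≥ 2/5`, hence `t ≥ -1/5`, and the
trivial estimate `ℙ (Y > t) ≤ 1/2 + |t|` is enough because `δ` is then close to `1`
(`gaussian_tail_le_delta`).
-/

open MeasureTheory ProbabilityTheory
open scoped NNReal ENNReal

/-- The standard Gaussian density is at most `1`, so `(t, 0]` has mass at most `-t`. -/
lemma gaussianReal_Ioi_le_of_nonpos {t : ℝ} (ht : t ≤ 0) :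
    gaussianReal 0 1 (Set.Ioi t) ≤ ENNReal.ofReal (1 / 2 - t) := by
  have hpdf : ∀ x, gaussianPDF 0 1 x ≤ 1 := by
    intro x
    rw [gaussianPDF_def, gaussianPDFReal_def, ENNReal.ofReal_le_one]
    refine mul_le_one₀ ?_ (Real.exp_nonneg _) ?_
    · refine inv_le_one_of_one_le₀ (Real.one_le_sqrt.2 ?_)
      simp only [NNReal.coe_one]
      nlinarith [Real.pi_gt_three]
    · rw [Real.exp_le_one_iff]
      simp only [NNReal.coe_one]
      nlinarith [sq_nonneg (x - 0)]
  have hIoc : gaussianReal 0 1 (Set.Ioc t 0) ≤ ENNReal.ofReal (-t) := by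
    rw [gaussianReal_apply _ one_ne_zero]
    calc ∫⁻ x in Set.Ioc t 0, gaussianPDF 0 1 x ≤ ∫⁻ _ in Set.Ioc t 0, 1 :=
          lintegral_mono fun x => hpdf x
      _ = _ := by simp
  rw [← Set.Ioc_union_Ioi_eq_Ioi ht]
  calc _ ≤ gaussianReal 0 1 (Set.Ioc t 0) + gaussianReal 0 1 (Set.Ioi 0) := measure_union_le _ _
    _ ≤ ENNReal.ofReal (-t) + ENNReal.ofReal (1 / 2) := add_le_add hIoc gaussianReal_Ioi_zero_le
    _ = _ := by
      rw [← ENNReal.ofReal_add (by linarith) (by norm_num)]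
      congr 1
      ring

/-- The calibration of `c`: it makes the tail beyond `c - 1 / (2c)` at most `δ`. -/
lemma gaussian_tail_le_delta {δ c t : ℝ} (hδ : δ ∈ Set.Ioo (0 : ℝ) 1)
    (hc : Real.sqrt (2 * Real.log (1.25 / δ)) < c) (ht : c - 1 / (2 * c) ≤ t) :
    gaussianReal 0 1 (Set.Ioi t) ≤ ENNReal.ofReal δ := by
  obtain ⟨hδ0, hδ1⟩ := hδ
  have hc0 : 0 < c := (Real.sqrt_nonneg _).trans_lt hc
  have hlog : 2 * Real.log (1.25 / δ) < c ^ 2 := (Real.sqrt_lt' hc0).1 hc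
  have hexp : 1.25 * Real.exp (-c ^ 2 / 2) ≤ δ := by
    have h1 : -c ^ 2 / 2 ≤ Real.log (δ / 1.25) := by
      rw [← inv_div 1.25 δ, Real.log_inv]
      linarith
    have h2 := (Real.le_log_iff_exp_le (by positivity)).1 h1
    rw [le_div_iff₀ (by norm_num)] at h2
    linarith
  refine (measure_mono (Set.Ioi_subset_Ioi ht)).trans ?_
  set s := c - 1 / (2 * c) with hs
  rcases le_or_gt 0 s with h | h
  · refine (gaussianReal_Ioi_le_exp h).trans (ENNReal.ofReal_le_ofReal ?_)
    -- The cross term of `s²` is exactly `-1`; it costs the factor `√e`.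
    have hsq : c ^ 2 - 1 ≤ s ^ 2 := by
      have : s ^ 2 = c ^ 2 - 1 + (1 / (2 * c)) ^ 2 := by
        rw [hs]; field_simp; ring
      nlinarith [sq_nonneg (1 / (2 * c))]
    have h1 : Real.exp (-s ^ 2 / 2) ≤ Real.exp (1 / 2) * Real.exp (-c ^ 2 / 2) := by
      rw [← Real.exp_add]
      exact Real.exp_le_exp.2 (by linarith)
    have h2 : Real.exp (1 / 2) ≤ 2.5 := by
      have h3 : Real.exp (1 / 2) ^ 2 = Real.exp 1 := by
        rw [← Real.exp_nat_mul]; norm_num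
      nlinarith [Real.exp_one_lt_d9, Real.exp_pos (1 / 2)]
    nlinarith [Real.exp_pos (-c ^ 2 / 2)]
  · refine (gaussianReal_Ioi_le_of_nonpos h.le).trans (ENNReal.ofReal_le_ofReal ?_)
    have hs' : s * (2 * c) = 2 * c ^ 2 - 1 := by
      rw [hs]; field_simp
    have hc2 : c ^ 2 < 1 / 2 := by nlinarith
    have hc1 : 2 / 5 ≤ c ^ 2 := by
      have h1 : Real.log 1.25 ≤ Real.log (1.25 / δ) := by
        apply Real.log_le_log (by norm_num)
        rw [le_div_iff₀ hδ0]
        linarith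
      have h2 := Real.one_sub_inv_le_log_of_pos (x := 1.25) (by norm_num)
      norm_num at h2 h1 hlog ⊢
      linarith
    have hc3 : 1 / 2 < c := by nlinarith
    have hs2 : -(1 / 5) ≤ s := by nlinarith
    have h4 : 3 / 4 ≤ Real.exp (-c ^ 2 / 2) := by
      have := Real.add_one_le_exp (-c ^ 2 / 2)
      linarith
    linarith

/-! ### Product Gaussian measures -/

/-- The density of `N(m, v)` with respect to `N(m', v)`. -/
lemma gaussianReal_eq_withDensity (m m' : ℝ) {v : ℝ≥0} (hv : v ≠ 0) :
    gaussianReal m v = (gaussianReal m' v).withDensity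
      fun x => ENNReal.ofReal (Real.exp (((x - m') ^ 2 - (x - m) ^ 2) / (2 * v))) := by
  rw [gaussianReal_of_var_ne_zero _ hv, gaussianReal_of_var_ne_zero _ hv,
    ← withDensity_mul _ (measurable_gaussianPDF _ _) (by fun_prop)]
  congr 1
  ext x
  rw [Pi.mul_apply, gaussianPDF_def, gaussianPDF_def,
    ← ENNReal.ofReal_mul (gaussianPDFReal_nonneg _ _ _), gaussianPDFReal_def, gaussianPDFReal_def]
  beta_reduce
  rw [mul_assoc (Real.sqrt _)⁻¹, ← Real.exp_add]
  congr 3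
  ring

lemma pi_eq_withDensity_prod {ι : Type*} [Fintype ι] (μ ν : ι → Measure ℝ)
    [∀ i, IsProbabilityMeasure (μ i)] [∀ i, IsProbabilityMeasure (ν i)] (f : ι → ℝ → ℝ≥0∞)
    (hf : ∀ i, Measurable (f i)) (h : ∀ i, μ i = (ν i).withDensity (f i)) :
    Measure.pi μ = (Measure.pi ν).withDensity fun x => ∏ i, f i (x i) := by
  refine Measure.pi_eq fun s hs => ?_
  have hpi : MeasurableSet (Set.univ.pi s) := MeasurableSet.univ_pi hs
  rw [withDensity_apply _ hpi, ← lintegral_indicator hpi]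
  have hind : ∀ x : ι → ℝ, (Set.univ.pi s).indicator (fun x => ∏ i, f i (x i)) x
      = ∏ i, (s i).indicator (f i) (x i) := by
    intro x
    by_cases hx : x ∈ Set.univ.pi s
    · rw [Set.indicator_of_mem hx]
      exact Finset.prod_congr rfl fun i _ => (Set.indicator_of_mem (hx i trivial) _).symm
    · rw [Set.indicator_of_notMem hx]
      obtain ⟨i, hi⟩ : ∃ i, x i ∉ s i := by simpa using hx
      exact (Finset.prod_eq_zero (Finset.mem_univ i) (Set.indicator_of_notMem hi _)).symm
  have hm : ∀ i, Measurable ((s i).indicator (f i)) := fun i => (hf i).indicator (hs i)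
  simp_rw [hind]
  rw [lintegral_prod_eq_prod_lintegral_of_indepFun Finset.univ
    (fun i (x : ι → ℝ) => (s i).indicator (f i) (x i))
    (iIndepFun_pi fun i => (hm i).aemeasurable) fun i => (hm i).comp (measurable_pi_apply i)]
  refine Finset.prod_congr rfl fun i _ => ?_
  rw [h i, withDensity_apply _ (hs i), ← lintegral_indicator (hs i),
    (measurePreserving_eval ν i).lintegral_comp (hm i)]

/-- The likelihood ratio of two Gaussian vectors with the same covariance `vI`. -/
lemma pi_gaussianReal_eq_withDensity {ι : Type*} [Fintype ι] (a b : ι → ℝ) {v : ℝ≥0}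
    (hv : v ≠ 0) :
    Measure.pi (fun i => gaussianReal (a i) v)
      = (Measure.pi fun i => gaussianReal (b i) v).withDensity fun x =>
        ENNReal.ofReal (Real.exp (∑ i, ((x i - b i) ^ 2 - (x i - a i) ^ 2) / (2 * v))) := by
  rw [pi_eq_withDensity_prod (fun i => gaussianReal (a i) v) (fun i => gaussianReal (b i) v) _
    (fun i => by fun_prop) fun i => gaussianReal_eq_withDensity (a i) (b i) hv]
  congr 1
  ext x
  rw [Real.exp_sum, ENNReal.ofReal_prod_of_nonneg fun i _ => Real.exp_nonneg _]

/-- The centred projection of a Gaussian vector on a direction `u`, normalized so that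
`v * ‖u‖² = 1`, is a standard Gaussian. -/
lemma map_sum_pi_gaussianReal {ι : Type*} [Fintype ι] (a u : ι → ℝ) {v : ℝ≥0}
    (hu : ∑ i, u i ^ 2 * (v : ℝ) = 1) :
    (Measure.pi fun i => gaussianReal (a i) v).map (fun x => ∑ i, u i * (x i - a i))
      = gaussianReal 0 1 := by
  have hlaw : ∀ i, (Measure.pi fun i => gaussianReal (a i) v).map (fun x => u i * (x i - a i))
      = gaussianReal 0 (.mk (u i ^ 2) (sq_nonneg _) * v) := by
    intro i
    have h1 : (fun x : ι → ℝ => u i * (x i - a i)) = (u i * ·) ∘ (· - a i) ∘ Function.eval i := rfl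
    rw [h1, ← Measure.map_map (by fun_prop) (by fun_prop),
      ← Measure.map_map (by fun_prop) (by fun_prop),
      (measurePreserving_eval (fun i => gaussianReal (a i) v) i).map_eq,
      gaussianReal_map_sub_const, gaussianReal_map_const_mul, sub_self, mul_zero]
  have hind : iIndepFun (fun i (x : ι → ℝ) => u i * (x i - a i))
      (Measure.pi fun i => gaussianReal (a i) v) :=
    iIndepFun_pi (X := fun i y => u i * (y - a i)) fun i =>
      (by fun_prop : Measurable fun y => u i * (y - a i)).aemeasurable
  apply Measure.ext_of_charFun
  have h := hind.charFun_map_fun_sum_eq_prod fun i =>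
    (by fun_prop : Measurable fun x : ι → ℝ => u i * (x i - a i)).aemeasurable
  rw [h]
  ext t
  simp_rw [Finset.prod_apply, hlaw, charFun_gaussianReal]
  rw [← Complex.exp_sum]
  congr 1
  have hu' : ∑ i, (u i : ℂ) ^ 2 * ((v : ℝ) : ℂ) = 1 := by exact_mod_cast hu
  simp only [Complex.ofReal_zero, mul_zero, zero_mul, zero_sub, Finset.sum_neg_distrib,
    NNReal.coe_mul, NNReal.coe_mk, Complex.ofReal_mul, Complex.ofReal_pow, NNReal.coe_one,
    Complex.ofReal_one, one_mul]
  rw [← Finset.sum_div, ← Finset.sum_mul, hu', one_mul]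

/-! ### Privacy of the Gaussian mechanism -/

/-- The vector-valued Gaussian mechanism is `(ε, δ)`-differentially private. -/
theorem gaussian_mechanism_vector
    (d : ℕ) (hd : 1 ≤ d) (a b : Fin d → ℝ) (S : ℝ) (hS : 0 < S)
    (hab : Real.sqrt (∑ i, (a i - b i) ^ 2) ≤ S)
    (δ : ℝ) (hδ : δ ∈ Set.Ioo (0 : ℝ) 1)
    (ε : ℝ) (hε : ε ∈ Set.Ioo (0 : ℝ) 1)
    (c : ℝ) (hc : Real.sqrt (2 * Real.log (1.25 / δ)) < c)
    (A : Set (Fin d → ℝ)) (hA : MeasurableSet A) :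
    Measure.pi (fun i => gaussianReal (a i) ⟨(c * S / ε) ^ 2, by positivity⟩) A
      ≤ ENNReal.ofReal (Real.exp ε) *
          Measure.pi (fun i => gaussianReal (b i) ⟨(c * S / ε) ^ 2, by positivity⟩) A
        + ENNReal.ofReal δ := by
  obtain ⟨hε0, hε1⟩ := hε
  have hc0 : 0 < c := (Real.sqrt_nonneg _).trans_lt hc
  have hσ : 0 < c * S / ε := by positivity
  have hσS : c * S / ε * ε = c * S := by field_simp
  generalize c * S / ε = σ at hσ hσS ⊢
  set v : ℝ≥0 := ⟨σ ^ 2, by positivity⟩ with hv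
  have hvσ : (v : ℝ) = σ ^ 2 := rfl
  have hv0 : v ≠ 0 := by
    rw [← NNReal.coe_ne_zero, hvσ]
    positivity
  set D := Real.sqrt (∑ i, (a i - b i) ^ 2) with hD
  have hD2 : D ^ 2 = ∑ i, (a i - b i) ^ 2 := Real.sq_sqrt (by positivity)
  rcases (show 0 ≤ D from Real.sqrt_nonneg _).eq_or_lt with h0 | hDpos
  · -- If `a = b` the two laws coincide.
    have hsum : ∑ i, (a i - b i) ^ 2 = 0 := by rw [← hD2, ← h0]; ring
    have hEq : a = b := by
      ext i
      have := (Finset.sum_eq_zero_iff_of_nonneg fun i _ => sq_nonneg (a i - b i)).1 hsum i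
        (Finset.mem_univ i)
      nlinarith [pow_eq_zero_iff (two_ne_zero) |>.1 this]
    rw [hEq]
    refine le_trans ?_ le_self_add
    refine le_mul_of_one_le_left' ?_
    rw [ENNReal.one_le_ofReal]
    exact Real.one_le_exp hε0.le
  set t := ε * σ / D - D / (2 * σ) with ht
  set Y : (Fin d → ℝ) → ℝ := fun x => ∑ i, (a i - b i) / (σ * D) * (x i - a i) with hY
  have hYm : Measurable Y := by fun_prop
  set P := Measure.pi fun i => gaussianReal (a i) v with hP
  set Q := Measure.pi fun i => gaussianReal (b i) v with hQ
  have hloss : ∀ x : Fin d → ℝ, ∑ i, ((x i - b i) ^ 2 - (x i - a i) ^ 2) / (2 * v)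
      = D / σ * Y x + D ^ 2 / (2 * σ ^ 2) := by
    intro x
    rw [hD2, hY, Finset.mul_sum, Finset.sum_div, ← Finset.sum_add_distrib]
    refine Finset.sum_congr rfl fun i _ => ?_
    rw [hvσ]
    field_simp
    ring
  have htail : P (Y ⁻¹' Set.Ioi t) ≤ ENNReal.ofReal δ := by
    rw [← Measure.map_apply hYm measurableSet_Ioi, hP, hY, map_sum_pi_gaussianReal]
    · refine gaussian_tail_le_delta hδ hc ?_
      -- `t` decreases in `D`, and at `D = S` it equals `c - ε / (2c)`.
      have h1 : c ≤ ε * σ / D := by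
        rw [le_div_iff₀ hDpos]
        nlinarith
      have h2 : D / (2 * σ) ≤ 1 / (2 * c) := by
        rw [div_le_div_iff₀ (by positivity) (by positivity)]
        nlinarith
      rw [ht]
      linarith
    · simp_rw [div_pow, ← Finset.sum_mul, ← Finset.sum_div, ← hD2, hvσ]
      field_simp
  have hgood : P (A ∩ Y ⁻¹' Set.Iic t) ≤ ENNReal.ofReal (Real.exp ε) * Q A := by
    have hm : MeasurableSet (A ∩ Y ⁻¹' Set.Iic t) := hA.inter (hYm measurableSet_Iic)
    rw [hP, pi_gaussianReal_eq_withDensity a b hv0, withDensity_apply _ hm]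
    calc _ ≤ ∫⁻ _ in A ∩ Y ⁻¹' Set.Iic t, ENNReal.ofReal (Real.exp ε) ∂Q := by
          refine setLIntegral_mono' hm fun x hx => ?_
          refine ENNReal.ofReal_le_ofReal (Real.exp_le_exp.2 ?_)
          have hx : Y x ≤ t := hx.2
          rw [hloss]
          calc D / σ * Y x + D ^ 2 / (2 * σ ^ 2) ≤ D / σ * t + D ^ 2 / (2 * σ ^ 2) := by gcongr
            _ = ε := by rw [ht]; field_simp; ring
      _ = ENNReal.ofReal (Real.exp ε) * Q (A ∩ Y ⁻¹' Set.Iic t) := by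
          rw [setLIntegral_const]
      _ ≤ _ := by gcongr; exact Set.inter_subset_left
  calc P A ≤ P (A ∩ Y ⁻¹' Set.Iic t) + P (Y ⁻¹' Set.Ioi t) := by
        refine (measure_mono fun x hx => ?_).trans (measure_union_le _ _)
        rcases le_or_gt (Y x) t with h | h
        · exact Or.inl ⟨hx, h⟩
        · exact Or.inr h
    _ ≤ _ := add_le_add hgood htail
end
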